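/- For all nonnegative integers α, β and n, the Rodrigues expression P_n^{α,β}(x) = ((-1)^n/(2^n n!)) (1-x)^{-α} (1+x)^{-β} (d^n/dx^n)[(1-x)^{n+α}(1+x)^{n+β}] agrees on the open interval (-1,1) with a polynomial of degree exactly n; i.e. there exists a real polynomial p with deg p = n such that p(x) equals this expression for every x ∈ (-1,1). -/

import Mathlib

/-! Differentiating `n` times lowers the order of vanishing at `1` and `-1` by at most `n`, so
`(1 - X) ^ a * (1 + X) ^ b` divides the `n`-th derivative of
`(1 - X) ^ (n + a) * (1 + X) ^ (n + b)`. In characteristic zero that derivative has degree exactly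
`(2 * n + a + b) - n`, which leaves degree `n` for the quotient.
-/

section Rodrigues

open Polynomial

theorem iteratedDeriv_polynomial_eval {𝕜 : Type*} [NontriviallyNormedField 𝕜] (p : 𝕜[X]) (n : ℕ) :
    iteratedDeriv n (fun x => p.eval x) = fun x => (derivative^[n] p).eval x := by
  induction n with
  | zero => exact iteratedDeriv_zero
  | succ n ih =>
    rw [iteratedDeriv_succ, ih, Function.iterate_succ_apply']
    exact funext fun _ => Polynomial.deriv _

theorem degree_iterate_derivative_of_degree_eq_add {R : Type*} [Semiring R] [IsAddTorsionFree R]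
    {p : R[X]} {m n : ℕ} (hp : p.degree = (m + n : ℕ)) : (derivative^[n] p).degree = m := by
  induction n generalizing p with
  | zero => exact hp
  | succ n ih =>
    have hnat : p.natDegree = m + n + 1 := natDegree_eq_of_degree_eq_some hp
    refine ih ?_
    rw [degree_derivative (by lia), hnat, Nat.add_sub_cancel]

theorem pow_mul_pow_dvd_iterate_derivative_of_isCoprime {R : Type*} [CommSemiring R] {p q : R[X]}
    (hpq : IsCoprime p q) (a b n : ℕ) :
    p ^ a * q ^ b ∣ derivative^[n] (p ^ (n + a) * q ^ (n + b)) := by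
  have hp := pow_sub_dvd_iterate_derivative_of_pow_dvd n (dvd_mul_right (p ^ (n + a)) (q ^ (n + b)))
  have hq := pow_sub_dvd_iterate_derivative_of_pow_dvd n (dvd_mul_left (q ^ (n + b)) (p ^ (n + a)))
  rw [Nat.add_sub_cancel_left] at hp hq
  exact hpq.pow.mul_dvd hp hq

theorem isCoprime_one_sub_X_one_add_X {R : Type*} [CommRing R] (h : IsUnit (2 : R)) :
    IsCoprime (1 - X : R[X]) (1 + X) := by
  obtain ⟨c, hc⟩ := h.exists_left_inv
  refine ⟨C c, C c, ?_⟩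
  calc C c * (1 - X) + C c * (1 + X) = C c * C 2 := by rw [C_ofNat]; ring
    _ = 1 := by rw [← C_mul, hc, C_1]

/-- The weight `(1 - x) ^ a * (1 + x) ^ b`, with respect to which the Jacobi polynomials are
orthogonal on `(-1, 1)`, as a polynomial; the exponents are natural numbers. -/
noncomputable def jacobiWeight (R : Type*) [CommRing R] (a b : ℕ) : R[X] :=
  (1 - X) ^ a * (1 + X) ^ b

theorem eval_jacobiWeight {R : Type*} [CommRing R] (a b : ℕ) (x : R) :
    (jacobiWeight R a b).eval x = (1 - x) ^ a * (1 + x) ^ b := by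
  simp [jacobiWeight]

theorem degree_jacobiWeight {R : Type*} [CommRing R] [IsDomain R] (a b : ℕ) :
    (jacobiWeight R a b).degree = (a + b : ℕ) := by
  have hsub : (1 - X : R[X]).degree = 1 := by rw [← neg_sub, degree_neg, ← C_1, degree_X_sub_C]
  have hadd : (1 + X : R[X]).degree = 1 := by rw [add_comm, ← C_1, degree_X_add_C]
  simp [jacobiWeight, hsub, hadd]

theorem jacobiWeight_ne_zero {R : Type*} [CommRing R] [IsDomain R] (a b : ℕ) :
    jacobiWeight R a b ≠ 0 := by
  rw [← degree_ne_bot, degree_jacobiWeight]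
  exact WithBot.natCast_ne_bot _

/-- The Jacobi polynomial `P_n^{a,b}`, given by the Rodrigues formula. Dividing by the weight is
polynomial division, which is exact when `2 ≠ 0`; if `2 ^ n * n!` vanishes in `K`, the constant in
front is the junk value `0`. -/
noncomputable def jacobiPolynomial (K : Type*) [Field K] (a b n : ℕ) : K[X] :=
  C ((-1 : K) ^ n / (2 ^ n * n.factorial)) *
    (derivative^[n] (jacobiWeight K (n + a) (n + b)) / jacobiWeight K a b)

theorem jacobiWeight_mul_jacobiPolynomial {K : Type*} [Field K] [NeZero (2 : K)] (a b n : ℕ) :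
    jacobiWeight K a b * jacobiPolynomial K a b n =
      C ((-1 : K) ^ n / (2 ^ n * n.factorial)) *
        derivative^[n] (jacobiWeight K (n + a) (n + b)) := by
  have hdvd : jacobiWeight K a b ∣ derivative^[n] (jacobiWeight K (n + a) (n + b)) :=
    pow_mul_pow_dvd_iterate_derivative_of_isCoprime
      (isCoprime_one_sub_X_one_add_X (IsUnit.mk0 2 two_ne_zero)) a b n
  rw [jacobiPolynomial, mul_left_comm,
    EuclideanDomain.mul_div_cancel' (jacobiWeight_ne_zero a b) hdvd]

theorem degree_jacobiPolynomial {K : Type*} [Field K] [CharZero K] (a b n : ℕ) :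
    (jacobiPolynomial K a b n).degree = n := by
  have hconst : (-1 : K) ^ n / (2 ^ n * n.factorial) ≠ 0 := by
    simp [Nat.factorial_ne_zero]
  have hderiv : (derivative^[n] (jacobiWeight K (n + a) (n + b))).degree = (a + b + n : ℕ) := by
    refine degree_iterate_derivative_of_degree_eq_add ?_
    rw [degree_jacobiWeight]
    congr 1
    ring
  have hdegree := congrArg degree (jacobiWeight_mul_jacobiPolynomial (K := K) a b n)
  rw [degree_mul, degree_jacobiWeight, degree_C_mul hconst, hderiv, Nat.cast_add (a + b)] at hdegree
  exact (WithBot.add_left_inj (WithBot.natCast_ne_bot _)).mp hdegree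

theorem eval_jacobiPolynomial {𝕜 : Type*} [NontriviallyNormedField 𝕜] [NeZero (2 : 𝕜)]
    (a b n : ℕ) {x : 𝕜} (hx : x ≠ 1) (hx' : x ≠ -1) :
    (jacobiPolynomial 𝕜 a b n).eval x =
      ((-1) ^ n / (2 ^ n * n.factorial)) * (1 - x) ^ (-(a : ℤ)) * (1 + x) ^ (-(b : ℤ)) *
        iteratedDeriv n (fun y : 𝕜 => (1 - y) ^ (n + a) * (1 + y) ^ (n + b)) x := by
  have hweight : (1 - x) ^ a * (1 + x) ^ b ≠ 0 :=
    mul_ne_zero (pow_ne_zero a (sub_ne_zero.mpr hx.symm))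
      (pow_ne_zero b fun h => hx' (eq_neg_of_add_eq_zero_right h))
  have hderiv : iteratedDeriv n (fun y : 𝕜 => (1 - y) ^ (n + a) * (1 + y) ^ (n + b)) x =
      (derivative^[n] (jacobiWeight 𝕜 (n + a) (n + b))).eval x := by
    simp only [← eval_jacobiWeight, iteratedDeriv_polynomial_eval]
  have hmul := congrArg (eval x) (jacobiWeight_mul_jacobiPolynomial a b n)
  rw [eval_mul, eval_C_mul, eval_jacobiWeight, ← hderiv] at hmul
  rw [eq_div_of_mul_eq hweight (mul_comm _ _ |>.trans hmul)]
  simp only [zpow_neg, zpow_natCast, div_eq_mul_inv, mul_inv]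
  ring

theorem jacobi_rodrigues_is_polynomial_general (𝕜 : Type*) [NontriviallyNormedField 𝕜] [CharZero 𝕜]
    (a b n : ℕ) :
    ∃ p : 𝕜[X], p.degree = n ∧ ∀ x, x ≠ 1 → x ≠ -1 →
      p.eval x = ((-1) ^ n / (2 ^ n * n.factorial)) * (1 - x) ^ (-(a : ℤ)) *
        (1 + x) ^ (-(b : ℤ)) *
        iteratedDeriv n (fun y : 𝕜 => (1 - y) ^ (n + a) * (1 + y) ^ (n + b)) x :=
  ⟨jacobiPolynomial 𝕜 a b n, degree_jacobiPolynomial a b n,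
    fun _ hx hx' => eval_jacobiPolynomial a b n hx hx'⟩

end Rodrigues

/-- The Rodrigues expression for the Jacobi polynomial `P_n^{a,b}` agrees on
`(-1, 1)` with a real polynomial of degree exactly `n`. -/
theorem jacobi_rodrigues_is_polynomial (a b n : ℕ) :
    ∃ p : Polynomial ℝ, p.degree = n ∧ ∀ x ∈ Set.Ioo (-1 : ℝ) 1,
      p.eval x = ((-1 : ℝ) ^ n / (2 ^ n * n.factorial)) * (1 - x) ^ (-(a : ℤ)) *
        (1 + x) ^ (-(b : ℤ)) *
        iteratedDeriv n (fun y : ℝ => (1 - y) ^ (n + a) * (1 + y) ^ (n + b)) x := by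
  obtain ⟨p, hdegree, heval⟩ := jacobi_rodrigues_is_polynomial_general ℝ a b n
  exact ⟨p, hdegree, fun x hx => heval x hx.2.ne hx.1.ne'⟩
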